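/- Let (Z_n)_{n≥0} be a nonincreasing sequence of positive real numbers satisfying the two-step recursion Z_{n+1} ≤ K b^n (Z_{n−1}^{1+μ₁} + Z_{n−1}^{1+μ₂}) for all n ≥ 1, where b > 1, K > 0 and 0 < μ₁ ≤ μ₂. If Z_0 ≤ min(1, (2b²K)^{−1/μ₁} b^{−2/μ₁²}, (2b²K)^{−1/μ₂} b^{−2/(μ₁μ₂) − 2(μ₂−μ₁)/μ₂²}), then Z_n → 0 as n → ∞. -/

import Mathlib

/-!
Put `r = b ^ (-(2 / μ₁)) < 1` and let `θ` be the bound on the initial data. The claim is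
`Z n ≤ r ^ ⌊n / 2⌋ * θ`, by induction in steps of two. As `Z n ≤ θ ≤ 1`, the term with exponent
`1 + μ₂` is dominated by the one with exponent `1 + μ₁`, and `b ^ (n + 1) ≤ b ^ 2 * b ^ (2 ⌊n / 2⌋)`
produces the constant `2 b ^ 2 K`. Since `r ^ μ₁ = b ^ (-2)`, the factor `Z n ^ μ₁` cancels
`b ^ (2 ⌊n / 2⌋)`, and the smallness of `θ` absorbs the constant and supplies one more factor `r`.
-/

open Filter

theorem rpow_add_rpow_le_two_mul_rpow {x p q : ℝ} (hx : 0 ≤ x) (hx_le : x ≤ 1) (hp : 0 ≤ p)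
    (hpq : p ≤ q) : x ^ p + x ^ q ≤ 2 * x ^ p := by
  linarith [Real.rpow_le_rpow_of_exponent_ge' hx hx_le hp hpq]

section FastGeometricDecay

variable {C β α δ : ℝ}

theorem rpow_le_inv_mul_rpow_of_le (hC : 0 < C) (hβ : 0 < β) (hα : 0 < α) (hδ : 0 ≤ δ)
    (hδ_le : δ ≤ C ^ (-(1 / α)) * β ^ (-(1 / α ^ 2))) :
    δ ^ α ≤ C⁻¹ * β ^ (-(1 / α)) :=
  calc δ ^ α ≤ (C ^ (-(1 / α)) * β ^ (-(1 / α ^ 2))) ^ α := by gcongr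
    _ = C ^ (-(1 / α) * α) * β ^ (-(1 / α ^ 2) * α) := by
      rw [Real.mul_rpow (by positivity) (by positivity), ← Real.rpow_mul hC.le,
        ← Real.rpow_mul hβ.le]
    _ = C⁻¹ * β ^ (-(1 / α)) := by
      rw [show -(1 / α) * α = -1 by field_simp, show -(1 / α ^ 2) * α = -(1 / α) by field_simp,
        Real.rpow_neg_one]

theorem rpow_neg_one_div_pow_rpow (hβ : 0 < β) (hα : α ≠ 0) (m : ℕ) :
    ((β ^ (-(1 / α))) ^ m) ^ α = (β ^ m)⁻¹ := by
  rw [← Real.rpow_natCast, ← Real.rpow_mul hβ.le, ← Real.rpow_mul hβ.le,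
    show -(1 / α) * m * α = -m by field_simp, Real.rpow_neg hβ.le, Real.rpow_natCast]

theorem mul_pow_mul_rpow_one_add_le {y : ℝ} {m : ℕ} (hC : 0 < C) (hβ : 0 < β) (hα : 0 < α)
    (hδ : 0 ≤ δ) (hδ_le : δ ≤ C ^ (-(1 / α)) * β ^ (-(1 / α ^ 2))) (hy : 0 ≤ y)
    (hy_le : y ≤ (β ^ (-(1 / α))) ^ m * δ) :
    C * β ^ m * y ^ (1 + α) ≤ (β ^ (-(1 / α))) ^ (m + 1) * δ := by
  set r := β ^ (-(1 / α)) with hr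
  have : 0 < r := Real.rpow_pos_of_pos hβ _
  have hy_rpow : y ^ α ≤ (β ^ m)⁻¹ * (C⁻¹ * r) :=
    calc y ^ α ≤ (r ^ m * δ) ^ α := by gcongr
      _ = (β ^ m)⁻¹ * δ ^ α := by
        rw [Real.mul_rpow (by positivity) hδ, hr, rpow_neg_one_div_pow_rpow hβ hα.ne']
      _ ≤ (β ^ m)⁻¹ * (C⁻¹ * r) := by
        gcongr
        exact rpow_le_inv_mul_rpow_of_le hC hβ hα hδ hδ_le
  calc C * β ^ m * y ^ (1 + α) = C * β ^ m * (y * y ^ α) := by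
        rw [Real.rpow_one_add' hy (by positivity)]
    _ ≤ C * β ^ m * (r ^ m * δ * ((β ^ m)⁻¹ * (C⁻¹ * r))) := by gcongr
    _ = r ^ (m + 1) * δ := by field_simp; ring

end FastGeometricDecay

section TwoStepRecursion

variable {Z : ℕ → ℝ} {K b μ₁ μ₂ δ : ℝ}

theorem le_pow_mul_of_two_step_recursion (hZ : ∀ n, 0 ≤ Z n) (hb : 1 ≤ b) (hK : 0 < K)
    (hμ₁ : 0 < μ₁) (hμ₁₂ : μ₁ ≤ μ₂)
    (hrec : ∀ n, Z (n + 2) ≤ K * b ^ (n + 1) * (Z n ^ (1 + μ₁) + Z n ^ (1 + μ₂)))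
    (hδ_le_one : δ ≤ 1)
    (hδ_le : δ ≤ (2 * b ^ 2 * K) ^ (-(1 / μ₁)) * (b ^ 2) ^ (-(1 / μ₁ ^ 2)))
    (hZ0 : Z 0 ≤ δ) (hZ1 : Z 1 ≤ δ) (n : ℕ) :
    Z n ≤ ((b ^ 2) ^ (-(1 / μ₁))) ^ (n / 2) * δ := by
  have : 0 < b := by linarith
  have hδ : 0 ≤ δ := (hZ 0).trans hZ0
  induction n using Nat.twoStepInduction with
  | zero => simpa using hZ0
  | one => simpa using hZ1
  | more n ih _ =>
    have hr_le_one : (b ^ 2) ^ (-(1 / μ₁)) ≤ 1 :=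
      Real.rpow_le_one_of_one_le_of_nonpos (one_le_pow₀ hb) (by simpa using hμ₁.le)
    have hZn_nonneg : 0 ≤ Z n := hZ n
    have hZn_le_one : Z n ≤ 1 :=
      ih.trans (mul_le_one₀ (pow_le_one₀ (by positivity) hr_le_one) hδ hδ_le_one)
    have hpow_le : b ^ (n + 1) ≤ b ^ 2 * (b ^ 2) ^ (n / 2) := by
      rw [← pow_mul, ← pow_add]
      exact pow_le_pow_right₀ hb (by omega)
    calc Z (n + 2) ≤ K * b ^ (n + 1) * (Z n ^ (1 + μ₁) + Z n ^ (1 + μ₂)) := hrec n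
      _ ≤ K * (b ^ 2 * (b ^ 2) ^ (n / 2)) * (2 * Z n ^ (1 + μ₁)) := by
        gcongr
        exact rpow_add_rpow_le_two_mul_rpow hZn_nonneg hZn_le_one (by positivity) (by linarith)
      _ = 2 * b ^ 2 * K * (b ^ 2) ^ (n / 2) * Z n ^ (1 + μ₁) := by ring
      _ ≤ ((b ^ 2) ^ (-(1 / μ₁))) ^ (n / 2 + 1) * δ :=
        mul_pow_mul_rpow_one_add_le (by positivity) (by positivity) hμ₁ hδ hδ_le hZn_nonneg ih
      _ = ((b ^ 2) ^ (-(1 / μ₁))) ^ ((n + 2) / 2) * δ := by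
        rw [Nat.add_div_right n two_pos]

theorem geometric_convergence_two_step_general (hZ : ∀ n, 0 ≤ Z n) (hb : 1 < b) (hK : 0 < K)
    (hμ₁ : 0 < μ₁) (hμ₁₂ : μ₁ ≤ μ₂)
    (hrec : ∀ n, Z (n + 2) ≤ K * b ^ (n + 1) * (Z n ^ (1 + μ₁) + Z n ^ (1 + μ₂)))
    (hZ01 : max (Z 0) (Z 1) ≤
      min 1 ((2 * b ^ 2 * K) ^ (-(1 / μ₁)) * b ^ (-(2 / μ₁ ^ 2)))) :
    Tendsto Z atTop (nhds 0) := by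
  have hb_sq : (b ^ 2) ^ (-(1 / μ₁ ^ 2)) = b ^ (-(2 / μ₁ ^ 2)) := by
    rw [← Real.rpow_natCast_mul (by positivity)]
    ring_nf
  have hr_lt_one : (b ^ 2) ^ (-(1 / μ₁)) < 1 :=
    Real.rpow_lt_one_of_one_lt_of_neg (one_lt_pow₀ hb two_ne_zero) (by simpa using hμ₁)
  have hgeom : Tendsto (fun n : ℕ ↦ ((b ^ 2) ^ (-(1 / μ₁))) ^ (n / 2) * max (Z 0) (Z 1))
      atTop (nhds 0) := by
    simpa using ((tendsto_pow_atTop_nhds_zero_of_lt_one (by positivity) hr_lt_one).comp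
      (Nat.tendsto_div_const_atTop two_ne_zero)).mul_const (max (Z 0) (Z 1))
  refine squeeze_zero hZ (fun n ↦ ?_) hgeom
  exact le_pow_mul_of_two_step_recursion hZ hb.le hK hμ₁ hμ₁₂ hrec (le_min_iff.1 hZ01).1
    (hb_sq ▸ (le_min_iff.1 hZ01).2) (le_max_left _ _) (le_max_right _ _) n

end TwoStepRecursion

/-- Two-step geometric convergence: if `(Z_n)` is nonincreasing, positive, satisfies
`Z_{n+1} ≤ K bⁿ (Z_{n-1}^{1+μ₁} + Z_{n-1}^{1+μ₂})` for `n ≥ 1`, with `b > 1`, `K > 0`,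
`0 < μ₁ ≤ μ₂`, and `Z₀` is small enough, then `Z_n → 0`. -/
theorem geometric_convergence_two_step (Z : ℕ → ℝ) (K b μ₁ μ₂ : ℝ)
    (hZpos : ∀ n, 0 < Z n) (hmono : ∀ n, Z (n + 1) ≤ Z n)
    (hb : 1 < b) (hK : 0 < K) (hμ₁ : 0 < μ₁) (hμ₁₂ : μ₁ ≤ μ₂)
    (hrec : ∀ n : ℕ, 1 ≤ n →
      Z (n + 1) ≤ K * b ^ (n : ℝ) * (Z (n - 1) ^ (1 + μ₁) + Z (n - 1) ^ (1 + μ₂)))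
    (hZ0 : Z 0 ≤ min 1 (min ((2 * b ^ (2 : ℝ) * K) ^ (-(1 / μ₁)) * b ^ (-(2 / μ₁ ^ 2)))
      ((2 * b ^ (2 : ℝ) * K) ^ (-(1 / μ₂)) *
        b ^ (-(2 / (μ₁ * μ₂)) - 2 * (μ₂ - μ₁) / μ₂ ^ 2)))) :
    Tendsto Z atTop (nhds 0) := by
  have hZ0_le := (Real.rpow_two b ▸ hZ0).trans (min_le_min_left 1 (min_le_left _ _))
  exact geometric_convergence_two_step_general (fun n ↦ (hZpos n).le) hb hK hμ₁ hμ₁₂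
    (fun n ↦ by exact_mod_cast hrec (n + 1) n.succ_pos) (max_le hZ0_le ((hmono 0).trans hZ0_le))
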